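/- Let A ∈ ℂ^{n×n}, B ∈ ℂ^{n×1}, C ∈ ℂ^{1×n}, S ∈ ℂ^{ν×ν}, L ∈ ℂ^{1×ν}, and let Π ∈ ℂ^{n×ν} satisfy AΠ + BL = ΠS. Let Υ ∈ ℂ^{ν×n} be such that 𝕃 = −ΥΠ is invertible, set σ𝕃 = −Υ A Π and G = −𝕃^{-1} Υ B. Then for every s ∈ ℂ such that sI − S + GL is invertible, the matrix σ𝕃 − s𝕃 is invertible and CΠ(sI − S + GL)^{-1} G = CΠ(σ𝕃 − s𝕃)^{-1} Υ B; that is, the transfer function of the reduced model Σ_G admits the Loewner-matrix representation K_G(s) = CΠ(σ𝕃 − s𝕃)^{-1}ΥB. -/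

import Mathlib

open Matrix

/-!
Left multiplication of the Sylvester equation `AΠ + BL = ΠS` by `Υ` gives `σ𝕃 - 𝕃S = ΥBL`. The gain
`G` solves `𝕃G = -ΥB`, so that `σ𝕃 - s𝕃 = -𝕃(sI - S + GL)`. The Loewner pencil thus differs from the
resolvent pencil of the reduced model by the invertible factor `-𝕃`, and the same factor carries `G`
to `ΥB`.
-/

section Pencil

variable {R m ν : Type*} [CommRing R] [Fintype m] [Fintype ν] [DecidableEq ν]
  {𝕃 σ𝕃 S : Matrix ν ν R} {L : Matrix m ν R} {G b : Matrix ν m R}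

theorem pencil_eq_neg_mul (hSylv : σ𝕃 - 𝕃 * S = b * L) (hG : 𝕃 * G = -b) (s : R) :
    σ𝕃 - s • 𝕃 = -(𝕃 * (s • (1 : Matrix ν ν R) - S + G * L)) := by
  have hGL : 𝕃 * (G * L) = 𝕃 * S - σ𝕃 := by
    rw [← Matrix.mul_assoc, hG, Matrix.neg_mul, ← hSylv, neg_sub]
  rw [mul_add, mul_sub, mul_smul_comm, mul_one, hGL]
  abel

theorem isUnit_pencil_iff (hSylv : σ𝕃 - 𝕃 * S = b * L) (hG : 𝕃 * G = -b)
    (h𝕃 : IsUnit 𝕃) (s : R) :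
    IsUnit (σ𝕃 - s • 𝕃) ↔ IsUnit (s • (1 : Matrix ν ν R) - S + G * L) := by
  rw [pencil_eq_neg_mul hSylv hG, IsUnit.neg_iff, h𝕃.mul_left_iff]

theorem pencil_inv_mul (hSylv : σ𝕃 - 𝕃 * S = b * L) (hG : 𝕃 * G = -b)
    (h𝕃 : IsUnit 𝕃) {s : R} (hs : IsUnit (s • (1 : Matrix ν ν R) - S + G * L)) :
    (σ𝕃 - s • 𝕃)⁻¹ * b = (s • (1 : Matrix ν ν R) - S + G * L)⁻¹ * G := by
  have hpencil : IsUnit (σ𝕃 - s • 𝕃) := (isUnit_pencil_iff hSylv hG h𝕃 s).mpr hs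
  have hsolve : (σ𝕃 - s • 𝕃) * ((s • (1 : Matrix ν ν R) - S + G * L)⁻¹ * G) = b := by
    rw [pencil_eq_neg_mul hSylv hG, Matrix.neg_mul, Matrix.mul_assoc,
      mul_nonsing_inv_cancel_left _ _ ((isUnit_iff_isUnit_det _).mp hs), hG, neg_neg]
  calc (σ𝕃 - s • 𝕃)⁻¹ * b
      = (σ𝕃 - s • 𝕃)⁻¹ *
          ((σ𝕃 - s • 𝕃) * ((s • (1 : Matrix ν ν R) - S + G * L)⁻¹ * G)) := by rw [hsolve]
    _ = (s • (1 : Matrix ν ν R) - S + G * L)⁻¹ * G :=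
      nonsing_inv_mul_cancel_left _ _ ((isUnit_iff_isUnit_det _).mp hpencil)

end Pencil

section Loewner

variable {R n m p ν : Type*} [CommRing R] [Fintype n]

/-- The Loewner matrix `𝕃 = -ΥΠ` of the right and left projection matrices `Π` (here `P`)
and `Υ`. -/
def loewner (Υ : Matrix ν n R) (P : Matrix n ν R) : Matrix ν ν R :=
  -(Υ * P)

/-- The shifted Loewner matrix `σ𝕃 = -ΥAΠ` of a system with state matrix `A`. -/
def shiftedLoewner (A : Matrix n n R) (Υ : Matrix ν n R) (P : Matrix n ν R) : Matrix ν ν R :=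
  -(Υ * A * P)

variable [Fintype m] [Fintype ν]

theorem shiftedLoewner_sub_loewner_mul {A : Matrix n n R} {B : Matrix n m R} {S : Matrix ν ν R}
    {L : Matrix m ν R} {P : Matrix n ν R} (hP : A * P + B * L = P * S) (Υ : Matrix ν n R) :
    shiftedLoewner A Υ P - loewner Υ P * S = Υ * B * L := by
  have hΥ : Υ * A * P + Υ * B * L = Υ * P * S := by
    simp only [Matrix.mul_assoc, ← hP, Matrix.mul_add]
  rw [shiftedLoewner, loewner, Matrix.neg_mul, ← hΥ]
  abel

theorem stmt_14_general [DecidableEq ν]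
    (A : Matrix n n R) (B : Matrix n m R) (C : Matrix p n R) (S : Matrix ν ν R)
    (L : Matrix m ν R) (P : Matrix n ν R) (hP : A * P + B * L = P * S)
    (Υ : Matrix ν n R) (h𝕃 : IsUnit (loewner Υ P))
    (G : Matrix ν m R) (hG : G = -((loewner Υ P)⁻¹ * (Υ * B)))
    (s : R) (hs : IsUnit (s • (1 : Matrix ν ν R) - S + G * L)) :
    IsUnit (shiftedLoewner A Υ P - s • loewner Υ P)
    ∧ C * P * (s • (1 : Matrix ν ν R) - S + G * L)⁻¹ * G
        = C * P * (shiftedLoewner A Υ P - s • loewner Υ P)⁻¹ * (Υ * B) := by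
  have hSylv : shiftedLoewner A Υ P - loewner Υ P * S = Υ * B * L :=
    shiftedLoewner_sub_loewner_mul hP Υ
  have h𝕃G : loewner Υ P * G = -(Υ * B) := by
    rw [hG, Matrix.mul_neg, mul_nonsing_inv_cancel_left _ _ ((isUnit_iff_isUnit_det _).mp h𝕃)]
  refine ⟨(isUnit_pencil_iff hSylv h𝕃G h𝕃 s).mpr hs, ?_⟩
  rw [Matrix.mul_assoc (C * P), Matrix.mul_assoc (C * P), pencil_inv_mul hSylv h𝕃G h𝕃 hs]

end Loewner

/-- Loewner-matrix representation of the reduced transfer function: with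
`𝕃 = −ΥΠ` invertible, `σ𝕃 = −ΥAΠ` and `G = −𝕃⁻¹ΥB`, for every `s` such that
`sI − S + GL` is invertible, `σ𝕃 − s𝕃` is invertible and
`CΠ(sI − S + GL)⁻¹G = CΠ(σ𝕃 − s𝕃)⁻¹ΥB`. -/
theorem stmt_14 {n ν : ℕ}
    (A : Matrix (Fin n) (Fin n) ℂ) (B : Matrix (Fin n) (Fin 1) ℂ)
    (C : Matrix (Fin 1) (Fin n) ℂ)
    (S : Matrix (Fin ν) (Fin ν) ℂ) (L : Matrix (Fin 1) (Fin ν) ℂ)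
    (Pm : Matrix (Fin n) (Fin ν) ℂ)
    (hPm : A * Pm + B * L = Pm * S)
    (Υ : Matrix (Fin ν) (Fin n) ℂ)
    (h𝕃 : IsUnit (-(Υ * Pm)))
    (G : Matrix (Fin ν) (Fin 1) ℂ)
    (hG : G = -((-(Υ * Pm))⁻¹ * (Υ * B)))
    (z : ℂ)
    (hz : IsUnit (z • (1 : Matrix (Fin ν) (Fin ν) ℂ) - S + G * L)) :
    IsUnit (-(Υ * A * Pm) - z • (-(Υ * Pm)))
    ∧ C * Pm * (z • (1 : Matrix (Fin ν) (Fin ν) ℂ) - S + G * L)⁻¹ * G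
        = C * Pm * (-(Υ * A * Pm) - z • (-(Υ * Pm)))⁻¹ * (Υ * B) :=
  stmt_14_general A B C S L Pm hPm Υ h𝕃 G hG z hz
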